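/- Let γ > -1/2 be real, let α be a real number with α > -1/2 and (γ-1)/2 < α < γ, let δ > 0 be real, and fix t ∈ (0, π]. If F_n^{(γ,γ),δ}(t) > 0 for all n ∈ ℕ (n ≥ 0), then F_n^{(α,α),δ}(t) > 0 for all n ∈ ℕ (n ≥ 0). -/

import Mathlib

open MeasureTheory Real Set

/-- Generalized binomial coefficient `C(u, v) = Γ(u+1) / (Γ(v+1) Γ(u-v+1))`. -/
noncomputable def genBinom (u v : ℝ) : ℝ :=
  Real.Gamma (u + 1) / (Real.Gamma (v + 1) * Real.Gamma (u - v + 1))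

/-- Jacobi polynomial `P_n^{(a,b)}(x)`. -/
noncomputable def jacobiP (n : ℕ) (a b x : ℝ) : ℝ :=
  ∑ k ∈ Finset.range (n + 1),
    genBinom ((n : ℝ) + a) ((n : ℝ) - (k : ℝ)) * genBinom ((n : ℝ) + b) (k : ℝ) *
      ((x - 1) / 2) ^ k * ((x + 1) / 2) ^ (n - k)

/-- `F_n^{(α,β),δ}(t)`. -/
noncomputable def FJ (n : ℕ) (α β δ t : ℝ) : ℝ :=
  ∫ θ in (0:ℝ)..t, (t - θ) ^ δ * jacobiP n (α - 1/2) (β - 1/2) (Real.cos θ) *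
    (Real.sin (θ / 2)) ^ (2 * α) * (Real.cos (θ / 2)) ^ (2 * β)

/-! Write `w_γ = (sin θ)^(2γ)` and let `y_m^γ` be the monic ultraspherical polynomials, orthogonal
with respect to `w_γ dθ` under `x = cos θ`. Then `F_n^{(γ,γ),δ}(t)` is a positive multiple of
`J_n^γ = ∫ f y_n^γ w_γ`, where `f θ = (t - θ)₊^δ`, and only the continuity of `f` matters. Let
`α ≤ γ`. The connection coefficients `A_m = ∫ y_m^γ y_n^α w_α` are nonnegative, by the
self-adjointness of the ultraspherical operator and a two-step recurrence from `γ` to `γ + 1`, and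
`A_n > 0`. If `2α - γ > -1/2`, then `y_n^α w_α / w_γ` lies in `L²(w_γ)`, so the ultraspherical
expansion of `f` gives `J_n^α = ∑ J_m^γ A_m / ∫ (y_m^γ)² w_γ`, whose terms are nonnegative and whose
`n`-th term is positive. That condition on `α` reads `(α + 1/2) / (γ + 1/2) > 1/2`, so finitely many
such steps lead from `γ` to any `α` in `(-1/2, γ]`. -/

section

open Polynomial

section Operator

/-- The ultraspherical differential operator `p ↦ (X² - 1) p'' + (2γ + 1) X p'`. Under `X = cos θ`
it is `-(d²/dθ² + 2γ cot θ d/dθ)`. -/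
noncomputable def ultraOp (γ : ℝ) : ℝ[X] →ₗ[ℝ] ℝ[X] :=
  LinearMap.mulLeft ℝ (X ^ 2 - 1) ∘ₗ derivative ∘ₗ derivative +
    (2 * γ + 1) • LinearMap.mulLeft ℝ X ∘ₗ derivative

lemma ultraOp_apply (γ : ℝ) (p : ℝ[X]) :
    ultraOp γ p =
      (X ^ 2 - 1) * derivative (derivative p) + (2 * γ + 1) • (X * derivative p) :=
  rfl

/-- The eigenvalue of `ultraOp γ` on its eigenpolynomial of degree `m`. -/
def ultraEigenvalue (γ : ℝ) (m : ℕ) : ℝ := m * (m + 2 * γ)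

lemma ultraEigenvalue_strictMono {γ : ℝ} (hγ : -1 / 2 < γ) : StrictMono (ultraEigenvalue γ) := by
  refine strictMono_nat_of_lt_succ fun m ↦ ?_
  have := m.cast_nonneg (α := ℝ)
  simp only [ultraEigenvalue, Nat.cast_add_one]
  linarith

lemma coeff_X_mul_derivative (p : ℝ[X]) (k : ℕ) : (X * derivative p).coeff k = k * p.coeff k := by
  rcases k with _ | k
  · simp
  · rw [coeff_X_mul, coeff_derivative, Nat.cast_add_one, mul_comm]

lemma coeff_ultraOp (γ : ℝ) (p : ℝ[X]) (k : ℕ) :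
    (ultraOp γ p).coeff k =
      ultraEigenvalue γ k * p.coeff k - (k + 2) * (k + 1) * p.coeff (k + 2) := by
  have expand : ultraOp γ p = X * derivative (X * derivative p) + (2 * γ) • (X * derivative p) -
      derivative (derivative p) := by
    rw [ultraOp_apply, derivative_mul, derivative_X, add_smul, one_smul]
    ring
  rw [expand]
  simp only [coeff_sub, coeff_add, coeff_smul, smul_eq_mul, coeff_X_mul_derivative,
    coeff_derivative, ultraEigenvalue]
  push_cast
  ring

lemma eq_zero_of_ultraOp_eq {γ : ℝ} (hγ : -1 / 2 < γ) {m : ℕ} {p : ℝ[X]}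
    (hp : ultraOp γ p = ultraEigenvalue γ m • p) (hm : p.coeff m = 0) : p = 0 := by
  by_contra hp0
  have hlead : p.coeff p.natDegree ≠ 0 := leadingCoeff_ne_zero.mpr hp0
  have htop := congrArg (coeff · p.natDegree) hp
  simp only [coeff_ultraOp, coeff_smul, smul_eq_mul,
    coeff_eq_zero_of_natDegree_lt (Nat.lt_add_of_pos_right two_pos), mul_zero, sub_zero] at htop
  have hdeg := (ultraEigenvalue_strictMono hγ).injective (mul_right_cancel₀ hlead htop)
  exact hlead (hdeg ▸ hm)

lemma ultraOp_eq_add (α γ : ℝ) (p : ℝ[X]) :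
    ultraOp α p = ultraOp γ p + (2 * (α - γ)) • (X * derivative p) := by
  rw [ultraOp_apply, ultraOp_apply]
  module

lemma derivative_ultraOp (γ : ℝ) (p : ℝ[X]) :
    derivative (ultraOp γ p) = ultraOp (γ + 1) (derivative p) + (2 * γ + 1) • derivative p := by
  simp only [ultraOp_apply, derivative_add, derivative_sub, derivative_mul, derivative_smul,
    derivative_X_pow, derivative_one, derivative_X, Nat.cast_ofNat]
  simp only [smul_eq_C_mul, map_add, map_mul, map_ofNat, map_one]
  ring

lemma ultraOp_add_one_X_mul_derivative (γ : ℝ) (p : ℝ[X]) :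
    ultraOp (γ + 1) (X * derivative p) =
      X * derivative (ultraOp γ p) + (2 : ℝ) • ultraOp γ p - (4 * γ) • (X * derivative p) := by
  rw [derivative_ultraOp]
  simp only [ultraOp_apply, derivative_add, derivative_mul, derivative_X, derivative_one]
  simp only [smul_eq_C_mul, map_add, map_mul, map_ofNat, map_one]
  ring

end Operator

section JacobiPolynomial

open Finset.HasAntidiagonal (antidiagonal mem_antidiagonal)

/-- `ω k = 1 / (k! Γ(k + γ + 1/2))`, so that `P_n^{(γ-1/2,γ-1/2)}` is a constant times
`∑ k + l = n, ω k ω l ((X - 1)/2)^k ((X + 1)/2)^l`. -/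
noncomputable def jacobiWeight (γ : ℝ) (k : ℕ) : ℝ :=
  (Gamma (k + 1) * Gamma (k + γ + 1 / 2))⁻¹

lemma jacobiWeight_pos {γ : ℝ} (hγ : -1 / 2 < γ) (k : ℕ) : 0 < jacobiWeight γ k := by
  have := k.cast_nonneg (α := ℝ)
  exact inv_pos.mpr (mul_pos (Gamma_pos_of_pos (by linarith)) (Gamma_pos_of_pos (by linarith)))

lemma jacobiWeight_succ {γ : ℝ} (hγ : -1 / 2 < γ) (k : ℕ) :
    (k + 1) * (k + γ + 1 / 2) * jacobiWeight γ (k + 1) = jacobiWeight γ k := by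
  have := k.cast_nonneg (α := ℝ)
  have h₁ : (k + 1 : ℝ) ≠ 0 := by positivity
  have h₂ : (k + γ + 1 / 2 : ℝ) ≠ 0 := by linarith
  have hcast : ((k + 1 : ℕ) + γ + 1 / 2 : ℝ) = k + γ + 1 / 2 + 1 := by push_cast; ring
  rw [jacobiWeight, jacobiWeight, hcast, Nat.cast_add_one, Gamma_add_one h₁, Gamma_add_one h₂,
    mul_mul_mul_comm, mul_inv, ← mul_assoc, mul_inv_cancel₀ (mul_ne_zero h₁ h₂), one_mul]

/-- The product `((X - 1)/2)^k ((X + 1)/2)^l`. -/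
noncomputable def jacobiMonomial (k l : ℕ) : ℝ[X] :=
  (C (1 / 2) * (X - 1)) ^ k * (C (1 / 2) * (X + 1)) ^ l

lemma eval_jacobiMonomial (k l : ℕ) (x : ℝ) :
    (jacobiMonomial k l).eval x = ((x - 1) / 2) ^ k * ((x + 1) / 2) ^ l := by
  simp [jacobiMonomial, inv_mul_eq_div]

lemma natDegree_jacobiMonomial_le (k l : ℕ) : (jacobiMonomial k l).natDegree ≤ k + l := by
  unfold jacobiMonomial
  compute_degree!

lemma coeff_jacobiMonomial (k l : ℕ) : (jacobiMonomial k l).coeff (k + l) = (1 / 2) ^ (k + l) := by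
  have hu : (C (1 / 2) * (X - 1) : ℝ[X]).natDegree ≤ 1 := by compute_degree
  have hv : (C (1 / 2) * (X + 1) : ℝ[X]).natDegree ≤ 1 := by compute_degree
  have hcu : (C (1 / 2) * (X - 1) : ℝ[X]).coeff 1 = 1 / 2 := by simp [coeff_one]
  have hcv : (C (1 / 2) * (X + 1) : ℝ[X]).coeff 1 = 1 / 2 := by simp [coeff_one]
  have huk := coeff_pow_of_natDegree_le (m := k) hu
  have hvl := coeff_pow_of_natDegree_le (m := l) hv
  rw [mul_one] at huk hvl
  rw [jacobiMonomial, coeff_mul_add_eq_of_natDegree_le, huk, hvl, hcu, hcv, pow_add]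
  · simpa using natDegree_pow_le_of_le k hu
  · simpa using natDegree_pow_le_of_le l hv

lemma ultraOp_jacobiMonomial (γ : ℝ) (k l : ℕ) :
    ultraOp γ (jacobiMonomial k l) =
      (k * (k + γ - 1 / 2)) • jacobiMonomial (k - 1) (l + 1) +
      (l * (l + γ - 1 / 2)) • jacobiMonomial (k + 1) (l - 1) +
      (2 * k * l + (γ + 1 / 2) * (k + l)) • jacobiMonomial k l := by
  refine Polynomial.funext fun x ↦ ?_
  rcases k with _ | _ | k <;> rcases l with _ | _ | l <;>
    simp [jacobiMonomial, ultraOp_apply, derivative_mul, derivative_pow] <;> ring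

lemma sum_antidiagonal_eq_of_shift {M : Type*} [AddCommMonoid M] {F G : ℕ → ℕ → M}
    (hF : ∀ l, F 0 l = 0) (hG : ∀ k, G k 0 = 0) (h : ∀ k l, F (k + 1) l = G k (l + 1)) (n : ℕ) :
    ∑ i ∈ antidiagonal n, F i.1 i.2 = ∑ i ∈ antidiagonal n, G i.1 i.2 := by
  rcases n with _ | n
  · simp [hF, hG]
  · rw [Finset.Nat.sum_antidiagonal_succ, Finset.Nat.sum_antidiagonal_succ']
    simp only [hF, hG, h]

/-- The Jacobi polynomial `P_n^{(γ-1/2,γ-1/2)}` without its constant factor `Γ(n + γ + 1/2)²`. -/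
noncomputable def rawJacobi (γ : ℝ) (n : ℕ) : ℝ[X] :=
  ∑ i ∈ antidiagonal n,
    (jacobiWeight γ i.1 * jacobiWeight γ i.2) • jacobiMonomial i.1 i.2

lemma jacobiP_eq_Gamma_sq_mul_eval_rawJacobi (γ : ℝ) (n : ℕ) (x : ℝ) :
    jacobiP n (γ - 1 / 2) (γ - 1 / 2) x =
      Gamma (n + γ + 1 / 2) ^ 2 * (rawJacobi γ n).eval x := by
  rw [rawJacobi, Finset.Nat.sum_antidiagonal_eq_sum_range_succ
    fun k l ↦ (jacobiWeight γ k * jacobiWeight γ l) • jacobiMonomial k l, jacobiP,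
    eval_finsetSum, Finset.mul_sum]
  refine Finset.sum_congr rfl fun k hk ↦ ?_
  have hkn : ((n - k : ℕ) : ℝ) = n - k := Nat.cast_sub (Finset.mem_range_succ_iff.mp hk)
  simp only [genBinom, jacobiWeight, eval_smul, eval_jacobiMonomial, smul_eq_mul, hkn]
  ring_nf

lemma ultraOp_rawJacobi {γ : ℝ} (hγ : -1 / 2 < γ) (n : ℕ) :
    ultraOp γ (rawJacobi γ n) = ultraEigenvalue γ n • rawJacobi γ n := by
  have shift_weight (k l : ℕ) :
      jacobiWeight γ (k + 1) * jacobiWeight γ l * ((k + 1 : ℕ) * ((k + 1 : ℕ) + γ - 1 / 2)) =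
        jacobiWeight γ k * jacobiWeight γ (l + 1) *
          ((l + 1 : ℕ) * ((l + 1 : ℕ) + γ - 1 / 2)) := by
    rw [← jacobiWeight_succ hγ k, ← jacobiWeight_succ hγ l]
    push_cast
    ring
  have lower := sum_antidiagonal_eq_of_shift
    (F := fun k l ↦ (jacobiWeight γ k * jacobiWeight γ l) • (k * (k + γ - 1 / 2)) •
      jacobiMonomial (k - 1) (l + 1))
    (G := fun k l ↦ (jacobiWeight γ k * jacobiWeight γ l) • (l * (l + γ - 1 / 2)) •
      jacobiMonomial k l)
    (by simp) (by simp) (fun k l ↦ by simp only [smul_smul, shift_weight, Nat.add_sub_cancel]) n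
  have raise := sum_antidiagonal_eq_of_shift
    (F := fun k l ↦ (jacobiWeight γ k * jacobiWeight γ l) • (k * (k + γ - 1 / 2)) •
      jacobiMonomial k l)
    (G := fun k l ↦ (jacobiWeight γ k * jacobiWeight γ l) • (l * (l + γ - 1 / 2)) •
      jacobiMonomial (k + 1) (l - 1))
    (by simp) (by simp) (fun k l ↦ by simp only [smul_smul, shift_weight, Nat.add_sub_cancel]) n
  simp only [rawJacobi, map_sum, map_smul, Finset.smul_sum, ultraOp_jacobiMonomial, smul_add,
    Finset.sum_add_distrib]
  rw [lower, ← raise, ← Finset.sum_add_distrib, ← Finset.sum_add_distrib]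
  refine Finset.sum_congr rfl fun i hi ↦ ?_
  rw [← mem_antidiagonal.mp hi, ultraEigenvalue]
  push_cast
  module

lemma natDegree_rawJacobi_le (γ : ℝ) (n : ℕ) : (rawJacobi γ n).natDegree ≤ n := by
  refine natDegree_sum_le_of_forall_le _ _ fun i hi ↦ (natDegree_smul_le _ _).trans ?_
  exact (natDegree_jacobiMonomial_le _ _).trans_eq (mem_antidiagonal.mp hi)

lemma coeff_rawJacobi_pos {γ : ℝ} (hγ : -1 / 2 < γ) (n : ℕ) : 0 < (rawJacobi γ n).coeff n := by
  rw [rawJacobi, finsetSum_coeff]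
  refine Finset.sum_pos (fun i hi ↦ ?_) ⟨(0, n), by simp⟩
  rw [coeff_smul, ← mem_antidiagonal.mp hi, coeff_jacobiMonomial, smul_eq_mul]
  have := jacobiWeight_pos hγ i.1
  have := jacobiWeight_pos hγ i.2
  positivity

end JacobiPolynomial

section Ultraspherical

/-- The monic ultraspherical polynomial of degree `n`: a positive multiple of
`P_n^{(γ-1/2,γ-1/2)}`. -/
noncomputable def ultraspherical (γ : ℝ) (n : ℕ) : ℝ[X] :=
  ((rawJacobi γ n).coeff n)⁻¹ • rawJacobi γ n

variable {γ : ℝ} (hγ : -1 / 2 < γ)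
include hγ

lemma coeff_ultraspherical_self (n : ℕ) : (ultraspherical γ n).coeff n = 1 := by
  rw [ultraspherical, coeff_smul, smul_eq_mul, inv_mul_cancel₀ (coeff_rawJacobi_pos hγ n).ne']

lemma natDegree_ultraspherical (n : ℕ) : (ultraspherical γ n).natDegree = n := by
  refine natDegree_eq_of_le_of_coeff_ne_zero ?_ ?_
  · exact (natDegree_smul_le _ _).trans (natDegree_rawJacobi_le γ n)
  · simp [coeff_ultraspherical_self hγ]

lemma monic_ultraspherical (n : ℕ) : (ultraspherical γ n).Monic :=
  monic_of_natDegree_le_of_coeff_eq_one n (natDegree_ultraspherical hγ n).le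
    (coeff_ultraspherical_self hγ n)

lemma degree_ultraspherical (n : ℕ) : (ultraspherical γ n).degree = n := by
  rw [degree_eq_natDegree (monic_ultraspherical hγ n).ne_zero, natDegree_ultraspherical hγ]

lemma ultraOp_ultraspherical (n : ℕ) :
    ultraOp γ (ultraspherical γ n) = ultraEigenvalue γ n • ultraspherical γ n := by
  rw [ultraspherical, map_smul, ultraOp_rawJacobi hγ, smul_comm]

lemma eq_coeff_smul_ultraspherical {m : ℕ} {p : ℝ[X]}
    (hp : ultraOp γ p = ultraEigenvalue γ m • p) : p = p.coeff m • ultraspherical γ m := by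
  refine sub_eq_zero.mp (eq_zero_of_ultraOp_eq hγ (m := m) ?_ ?_)
  · rw [map_sub, map_smul, hp, ultraOp_ultraspherical hγ, smul_sub, smul_comm]
  · simp [coeff_ultraspherical_self hγ]

lemma exists_jacobiP_eq_mul_eval_ultraspherical (n : ℕ) :
    ∃ c > 0, ∀ x, jacobiP n (γ - 1 / 2) (γ - 1 / 2) x = c * (ultraspherical γ n).eval x := by
  have hcoeff := coeff_rawJacobi_pos hγ n
  have hGamma : 0 < Gamma (n + γ + 1 / 2) :=
    Gamma_pos_of_pos (by linarith [n.cast_nonneg (α := ℝ)])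
  refine ⟨Gamma (n + γ + 1 / 2) ^ 2 * (rawJacobi γ n).coeff n, by positivity, fun x ↦ ?_⟩
  rw [jacobiP_eq_Gamma_sq_mul_eval_rawJacobi, ultraspherical, eval_smul, smul_eq_mul, mul_assoc,
    mul_inv_cancel_left₀ hcoeff.ne']

lemma ultraspherical_zero : ultraspherical γ 0 = 1 :=
  (monic_ultraspherical hγ 0).natDegree_eq_zero.mp (natDegree_ultraspherical hγ 0)

lemma ultraspherical_one : ultraspherical γ 1 = X := by
  have h := eq_coeff_smul_ultraspherical hγ (m := 1) (p := X) (by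
    simp [ultraOp_apply, ultraEigenvalue, add_comm])
  rw [coeff_X_one, one_smul] at h
  exact h.symm

lemma X_mul_derivative_ultraspherical_add (m : ℕ) :
    X * derivative (ultraspherical γ m) + (m + 2 * γ) • ultraspherical γ m =
      (2 * (m + γ)) • ultraspherical (γ + 1) m := by
  have heigen : ultraOp (γ + 1)
      (X * derivative (ultraspherical γ m) + (m + 2 * γ) • ultraspherical γ m) =
        ultraEigenvalue (γ + 1) m •
          (X * derivative (ultraspherical γ m) + (m + 2 * γ) • ultraspherical γ m) := by
    rw [map_add, map_smul, ultraOp_add_one_X_mul_derivative, ultraOp_eq_add (γ + 1) γ,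
      ultraOp_ultraspherical hγ, derivative_smul, mul_smul_comm, ultraEigenvalue, ultraEigenvalue]
    module
  rw [eq_coeff_smul_ultraspherical (by linarith) heigen, coeff_add, coeff_X_mul_derivative,
    coeff_smul, coeff_ultraspherical_self hγ]
  congr 1
  simp only [smul_eq_mul]
  ring

lemma coeff_ultraspherical_add_two_neg (m : ℕ) : (ultraspherical γ (m + 2)).coeff m < 0 := by
  have hcoeff := congrArg (coeff · m) (ultraOp_ultraspherical hγ (m + 2))
  simp only [coeff_ultraOp, coeff_smul, smul_eq_mul, coeff_ultraspherical_self hγ] at hcoeff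
  have hlt : ultraEigenvalue γ m < ultraEigenvalue γ (m + 2) :=
    ultraEigenvalue_strictMono hγ (by lia)
  have hprod : (ultraEigenvalue γ (m + 2) - ultraEigenvalue γ m) *
      (ultraspherical γ (m + 2)).coeff m < 0 := by
    have : 0 < ((m : ℝ) + 2) * (m + 1) := by positivity
    linarith
  exact neg_of_mul_neg_right hprod (sub_pos.mpr hlt).le

lemma exists_X_mul_derivative_ultraspherical_add_two (m : ℕ) :
    ∃ κ : ℝ, 0 < κ ∧ X * derivative (ultraspherical γ (m + 2)) =
      (m + 2 : ℝ) • ultraspherical γ (m + 2) + κ • ultraspherical (γ + 1) m := by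
  set y := ultraspherical γ (m + 2) with hy
  have heigen : ultraOp (γ + 1) (X * derivative y - (m + 2 : ℝ) • y) =
      ultraEigenvalue (γ + 1) m • (X * derivative y - (m + 2 : ℝ) • y) := by
    rw [map_sub, map_smul, ultraOp_add_one_X_mul_derivative, ultraOp_eq_add (γ + 1) γ,
      hy, ultraOp_ultraspherical hγ, derivative_smul, mul_smul_comm, ultraEigenvalue,
      ultraEigenvalue]
    push_cast
    module
  have hκ := eq_coeff_smul_ultraspherical (by linarith) heigen
  refine ⟨_, ?_, sub_eq_iff_eq_add'.mp hκ⟩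
  rw [coeff_sub, coeff_X_mul_derivative, coeff_smul, smul_eq_mul]
  linarith [coeff_ultraspherical_add_two_neg hγ m]

lemma exists_ultraspherical_add_one_add_two (m : ℕ) :
    ∃ κ : ℝ, 0 < κ ∧ ultraspherical (γ + 1) (m + 2) =
      ultraspherical γ (m + 2) + κ • ultraspherical (γ + 1) m := by
  obtain ⟨κ, hκ, hderiv⟩ := exists_X_mul_derivative_ultraspherical_add_two hγ m
  have hpos : 0 < 2 * ((m + 2 : ℕ) + γ) := by
    push_cast
    linarith [m.cast_nonneg (α := ℝ)]
  have hup := X_mul_derivative_ultraspherical_add hγ (m + 2)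
  refine ⟨κ / (2 * ((m + 2 : ℕ) + γ)), by positivity, ?_⟩
  refine smul_right_injective ℝ[X] hpos.ne' ?_
  simp only [smul_add, smul_smul, mul_div_cancel₀ κ hpos.ne', ← hup, hderiv]
  push_cast
  module

lemma mem_span_ultraspherical {p : ℝ[X]} {M : ℕ} (hp : p.degree < M) :
    p ∈ Submodule.span ℝ (ultraspherical γ '' Iio M) := by
  have hspan := Sequence.span_degreeLT ⟨ultraspherical γ, degree_ultraspherical hγ⟩ (m := M)
    fun m _ ↦ (monic_ultraspherical hγ m).leadingCoeff.symm ▸ isUnit_one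
  exact hspan ▸ mem_degreeLT.mpr hp

lemma map_eq_zero_of_degree_lt {E : Type*} [AddCommMonoid E] [Module ℝ E] {φ : ℝ[X] →ₗ[ℝ] E}
    {p : ℝ[X]} {M : ℕ} (hp : p.degree < M) (hφ : ∀ m < M, φ (ultraspherical γ m) = 0) :
    φ p = 0 := by
  have hspan : Submodule.span ℝ (ultraspherical γ '' Iio M) ≤ LinearMap.ker φ := by
    rw [Submodule.span_le]
    rintro _ ⟨m, hm, rfl⟩
    exact hφ m hm
  exact hspan (mem_span_ultraspherical hγ hp)

lemma map_ultraspherical_add_one_nonneg {φ : ℝ[X] →ₗ[ℝ] ℝ} (k : ℕ)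
    (hφ : ∀ j ≤ k, 0 ≤ φ (ultraspherical γ j)) : 0 ≤ φ (ultraspherical (γ + 1) k) := by
  have hγ₁ : -1 / 2 < γ + 1 := by linarith
  induction k using Nat.strong_induction_on with
  | h k ih =>
    match k with
    | 0 =>
      rw [ultraspherical_zero hγ₁, ← ultraspherical_zero hγ]
      exact hφ 0 le_rfl
    | 1 =>
      rw [ultraspherical_one hγ₁, ← ultraspherical_one hγ]
      exact hφ 1 le_rfl
    | k + 2 =>
      obtain ⟨κ, hκ, hshift⟩ := exists_ultraspherical_add_one_add_two hγ k
      have hk := ih k (by lia) fun j hj ↦ hφ j (by lia)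
      rw [hshift, map_add, map_smul, smul_eq_mul]
      exact add_nonneg (hφ (k + 2) le_rfl) (mul_nonneg hκ.le hk)

lemma map_X_mul_derivative_ultraspherical_sub_nonneg {φ : ℝ[X] →ₗ[ℝ] ℝ} (m : ℕ)
    (hφ : ∀ j < m, 0 ≤ φ (ultraspherical γ j)) :
    0 ≤ φ (X * derivative (ultraspherical γ m) - (m : ℝ) • ultraspherical γ m) := by
  match m with
  | 0 => simp [ultraspherical_zero hγ]
  | 1 => simp [ultraspherical_one hγ]
  | m + 2 =>
    obtain ⟨κ, hκ, hderiv⟩ := exists_X_mul_derivative_ultraspherical_add_two hγ m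
    have hm := map_ultraspherical_add_one_nonneg hγ m fun j hj ↦ hφ j (by lia)
    rw [hderiv, Nat.cast_add, Nat.cast_ofNat, add_sub_cancel_left, map_smul, smul_eq_mul]
    exact mul_nonneg hκ.le hm

end Ultraspherical

section UltraIntegral

lemma intervalIntegrable_sin_rpow {s : ℝ} (hs : -1 < s) :
    IntervalIntegrable (fun θ ↦ sin θ ^ s) volume 0 π := by
  have left_half : IntervalIntegrable (fun θ ↦ sin θ ^ s) volume 0 (π / 2) := by
    have sinc_pos (θ : ℝ) (hθ : θ ∈ Icc 0 (π / 2)) : 0 < sinc θ := by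
      rcases hθ.1.eq_or_lt with rfl | hpos
      · simp
      · rw [sinc_of_ne_zero hpos.ne']
        exact div_pos (sin_pos_of_pos_of_lt_pi hpos (by linarith [hθ.2, pi_pos])) hpos
    have hsinc : ContinuousOn (fun θ ↦ sinc θ ^ s) (uIcc 0 (π / 2)) := by
      rw [uIcc_of_le pi_div_two_pos.le]
      exact continuous_sinc.continuousOn.rpow_const fun θ hθ ↦ Or.inl (sinc_pos θ hθ).ne'
    refine ((intervalIntegral.intervalIntegrable_rpow' hs).mul_continuousOn hsinc).congr_uIoo ?_
    rw [uIoo_of_le pi_div_two_pos.le]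
    intro θ hθ
    have hsin : θ * sinc θ = sin θ := by
      rw [sinc_of_ne_zero hθ.1.ne', mul_div_cancel₀ _ hθ.1.ne']
    simp only [← mul_rpow hθ.1.le (sinc_pos θ (Ioo_subset_Icc_self hθ)).le, hsin]
  have right_half := left_half.comp_sub_left π
  simp only [sin_pi_sub, sub_zero, sub_half] at right_half
  exact left_half.trans right_half.symm

variable {γ : ℝ} (hγ : -1 / 2 < γ)
include hγ

lemma intervalIntegrable_mul_sin_rpow (f : C(ℝ, ℝ)) :
    IntervalIntegrable (fun θ ↦ f θ * sin θ ^ (2 * γ)) volume 0 π :=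
  (intervalIntegrable_sin_rpow (by linarith)).continuousOn_mul f.continuous.continuousOn

/-- Integration over `[0, π]` against the ultraspherical weight `(sin θ)^(2γ)`. The integrands are
bundled as continuous maps so that the integral is linear. -/
noncomputable def ultraIntegral : C(ℝ, ℝ) →ₗ[ℝ] ℝ where
  toFun f := ∫ θ in 0..π, f θ * sin θ ^ (2 * γ)
  map_add' f g := by
    simp only [ContinuousMap.add_apply, add_mul]
    exact intervalIntegral.integral_add (intervalIntegrable_mul_sin_rpow hγ f)
      (intervalIntegrable_mul_sin_rpow hγ g)
  map_smul' c f := by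
    simp only [ContinuousMap.smul_apply, smul_eq_mul, mul_assoc, RingHom.id_apply]
    exact intervalIntegral.integral_const_mul c _

lemma ultraIntegral_apply (f : C(ℝ, ℝ)) :
    ultraIntegral hγ f = ∫ θ in 0..π, f θ * sin θ ^ (2 * γ) :=
  rfl

lemma ultraIntegral_mono {f g : C(ℝ, ℝ)} (hfg : ∀ θ ∈ Ioo 0 π, f θ ≤ g θ) :
    ultraIntegral hγ f ≤ ultraIntegral hγ g :=
  intervalIntegral.integral_mono_on_of_le_Ioo pi_pos.le (intervalIntegrable_mul_sin_rpow hγ f)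
    (intervalIntegrable_mul_sin_rpow hγ g) fun θ hθ ↦
      mul_le_mul_of_nonneg_right (hfg θ hθ) (rpow_nonneg (sin_pos_of_mem_Ioo hθ).le _)

lemma ultraIntegral_mul_self_nonneg (f : C(ℝ, ℝ)) : 0 ≤ ultraIntegral hγ (f * f) := by
  simpa using ultraIntegral_mono hγ (f := 0) (g := f * f) fun θ _ ↦ mul_self_nonneg (f θ)

lemma ultraIntegral_mul_self_pos {f : C(ℝ, ℝ)} (hf : ∃ θ ∈ Ioo 0 π, f θ ≠ 0) :
    0 < ultraIntegral hγ (f * f) := by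
  rw [ultraIntegral_apply, intervalIntegral.integral_pos_iff_support_of_nonneg_ae' ?_
    (intervalIntegrable_mul_sin_rpow hγ _)]
  · refine ⟨pi_pos, ?_⟩
    have hopen : IsOpen (Ioo 0 π ∩ Function.support f) :=
      isOpen_Ioo.inter f.continuous.isOpen_support
    refine (hopen.measure_pos volume hf).trans_le (measure_mono fun θ ⟨hθ, hfθ⟩ ↦ ?_)
    have hw := rpow_pos_of_pos (sin_pos_of_mem_Ioo hθ) (2 * γ)
    exact ⟨mul_ne_zero (mul_ne_zero hfθ hfθ) hw.ne', Ioo_subset_Ioc_self hθ⟩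
  · rw [uIoc_of_le pi_pos.le]
    refine ae_restrict_of_forall_mem measurableSet_Ioc fun θ hθ ↦ ?_
    have hw := rpow_nonneg (sin_nonneg_of_mem_Icc (Ioc_subset_Icc_self hθ)) (2 * γ)
    exact mul_nonneg (mul_self_nonneg (f θ)) hw

lemma ultraIntegral_mul_sq_le {α β : ℝ} (hα : -1 / 2 < α) (hβ : -1 / 2 < β) (hαβγ : β + γ = 2 * α)
    (f r : C(ℝ, ℝ)) :
    ultraIntegral hα (f * r) ^ 2 ≤ ultraIntegral hγ (f * f) * ultraIntegral hβ (r * r) := by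
  have hnonneg (x : ℝ) : 0 ≤ ultraIntegral hγ (f * f) * (x * x) +
      2 * ultraIntegral hα (f * r) * x + ultraIntegral hβ (r * r) := by
    calc 0 ≤ ∫ θ in 0..π, (x * (f θ * sin θ ^ γ) + r θ * sin θ ^ β) ^ 2 :=
          intervalIntegral.integral_nonneg pi_pos.le fun θ _ ↦ sq_nonneg _
      _ = ∫ θ in 0..π, ((x * x) * ((f * f) θ * sin θ ^ (2 * γ)) +
            (2 * x) * ((f * r) θ * sin θ ^ (2 * α)) + (r * r) θ * sin θ ^ (2 * β)) := by
          refine intervalIntegral.integral_congr_Ioo_of_le pi_pos.le fun θ hθ ↦ ?_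
          have hsin := sin_pos_of_mem_Ioo hθ
          simp only [ContinuousMap.mul_apply, ← hαβγ, two_mul γ, two_mul β, rpow_add hsin]
          ring
      _ = _ := by
          have hff := intervalIntegrable_mul_sin_rpow hγ (f * f)
          have hfr := intervalIntegrable_mul_sin_rpow hα (f * r)
          rw [intervalIntegral.integral_add ((hff.const_mul _).add (hfr.const_mul _))
              (intervalIntegrable_mul_sin_rpow hβ (r * r)),
            intervalIntegral.integral_add (hff.const_mul _) (hfr.const_mul _),
            intervalIntegral.integral_const_mul, intervalIntegral.integral_const_mul]
          simp only [ultraIntegral_apply]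
          ring
  have := discrim_le_zero hnonneg
  rw [discrim] at this
  linarith

end UltraIntegral

section UltraMoment

/-- The substitution `X = cos θ`, carrying a polynomial to a continuous function of `θ`. -/
noncomputable def cosEval : ℝ[X] →ₐ[ℝ] C(ℝ, ℝ) :=
  aeval ⟨cos, continuous_cos⟩

lemma cosEval_apply (p : ℝ[X]) (θ : ℝ) : cosEval p θ = p.eval (cos θ) :=
  aeval_continuousMap_apply p _ θ

variable {γ : ℝ} (hγ : -1 / 2 < γ)

/-- The moment functional `p ↦ ∫ p(cos θ) f(θ) (sin θ)^(2γ) dθ` on polynomials. Its values on the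
ultraspherical polynomials are, up to normalization, the ultraspherical coefficients of `f`. -/
noncomputable def ultraMoment (f : C(ℝ, ℝ)) : ℝ[X] →ₗ[ℝ] ℝ :=
  ultraIntegral hγ ∘ₗ LinearMap.mulLeft ℝ f ∘ₗ cosEval.toLinearMap

lemma ultraMoment_apply (f : C(ℝ, ℝ)) (p : ℝ[X]) :
    ultraMoment hγ f p = ultraIntegral hγ (f * cosEval p) :=
  rfl

lemma ultraMoment_cosEval (p q : ℝ[X]) :
    ultraMoment hγ (cosEval p) q = ultraIntegral hγ (cosEval (p * q)) := by
  rw [ultraMoment_apply, map_mul cosEval]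

lemma ultraMoment_cosEval_comm (p q : ℝ[X]) :
    ultraMoment hγ (cosEval p) q = ultraMoment hγ (cosEval q) p := by
  rw [ultraMoment_cosEval, ultraMoment_cosEval, mul_comm]

lemma ultraMoment_cosEval_self_pos {p : ℝ[X]} (hp : p ≠ 0) :
    0 < ultraMoment hγ (cosEval p) p := by
  refine ultraIntegral_mul_self_pos hγ ?_
  by_contra! hzero
  refine hp (eq_zero_of_infinite_isRoot p ((Ioo_infinite (by simp : (-1 : ℝ) < 1)).mono ?_))
  intro x hx
  have hroot := hzero (arccos x) ⟨arccos_pos.mpr hx.2, arccos_lt_pi.mpr hx.1⟩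
  rwa [cosEval_apply, cos_arccos hx.1.le hx.2.le] at hroot

lemma ultraMoment_ultraOp (p q : ℝ[X]) :
    ultraMoment hγ (cosEval q) (ultraOp γ p) =
      ultraIntegral hγ (cosEval ((1 - X ^ 2) * (derivative p * derivative q))) := by
  -- The flux vanishes at both endpoints; its derivative is the difference of the two integrands.
  set flux : ℝ → ℝ := fun θ ↦ sin θ ^ (2 * γ + 1) * (derivative p * q).eval (cos θ) with hflux
  have flux_cont : Continuous flux :=
    (continuous_sin.rpow_const fun _ ↦ Or.inr (by linarith)).mul
      ((derivative p * q).continuous.comp continuous_cos)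
  have flux_deriv : ∀ θ ∈ Ioo 0 π, HasDerivAt flux
      (cosEval (q * ultraOp γ p - (1 - X ^ 2) * (derivative p * derivative q)) θ *
        sin θ ^ (2 * γ)) θ := by
    intro θ hθ
    have hsin := sin_pos_of_mem_Ioo hθ
    have hweight := (hasDerivAt_sin θ).rpow_const (p := 2 * γ + 1) (Or.inl hsin.ne')
    have hpoly := ((derivative p * q).hasDerivAt (cos θ)).comp θ (hasDerivAt_cos θ)
    refine (hweight.mul hpoly).congr_deriv ?_
    rw [add_sub_cancel_right, rpow_add_one hsin.ne']
    simp only [cosEval_apply, ultraOp_apply, derivative_mul, eval_add, eval_sub, eval_mul,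
      eval_smul, eval_pow, eval_X, eval_one, smul_eq_mul, Function.comp_apply]
    linear_combination (-sin θ ^ (2 * γ) * (eval (cos θ) (derivative (derivative p)) *
      eval (cos θ) q + eval (cos θ) (derivative p) * eval (cos θ) (derivative q))) *
        sin_sq_add_cos_sq θ
  rw [ultraMoment_cosEval, ← sub_eq_zero, ← map_sub, ← map_sub, ultraIntegral_apply,
    intervalIntegral.integral_eq_sub_of_hasDerivAt_of_le pi_pos.le flux_cont.continuousOn
      flux_deriv (intervalIntegrable_mul_sin_rpow hγ _)]
  simp [hflux, zero_rpow (by linarith : 2 * γ + 1 ≠ 0)]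

lemma ultraMoment_ultraOp_comm (p q : ℝ[X]) :
    ultraMoment hγ (cosEval q) (ultraOp γ p) = ultraMoment hγ (cosEval p) (ultraOp γ q) := by
  rw [ultraMoment_ultraOp, ultraMoment_ultraOp, mul_comm (derivative p)]

lemma ultraMoment_ultraspherical_ultraOp (n : ℕ) (p : ℝ[X]) :
    ultraMoment hγ (cosEval (ultraspherical γ n)) (ultraOp γ p) =
      ultraEigenvalue γ n * ultraMoment hγ (cosEval (ultraspherical γ n)) p := by
  rw [ultraMoment_ultraOp_comm, ultraOp_ultraspherical hγ, map_smul, smul_eq_mul,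
    ultraMoment_cosEval_comm]

lemma ultraMoment_ultraspherical_of_ne {m n : ℕ} (hmn : m ≠ n) :
    ultraMoment hγ (cosEval (ultraspherical γ n)) (ultraspherical γ m) = 0 := by
  have h := ultraMoment_ultraspherical_ultraOp hγ n (ultraspherical γ m)
  rw [ultraOp_ultraspherical hγ, map_smul, smul_eq_mul] at h
  by_contra hne
  exact hmn ((ultraEigenvalue_strictMono hγ).injective (mul_right_cancel₀ hne h))

lemma ultraMoment_ultraspherical_of_degree_lt {n : ℕ} {p : ℝ[X]} (hp : p.degree < n) :
    ultraMoment hγ (cosEval (ultraspherical γ n)) p = 0 :=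
  map_eq_zero_of_degree_lt hγ hp fun _ hm ↦ ultraMoment_ultraspherical_of_ne hγ hm.ne

lemma ultraMoment_ultraspherical_self_pos (n : ℕ) :
    0 < ultraMoment hγ (cosEval (ultraspherical γ n)) (ultraspherical γ n) :=
  ultraMoment_cosEval_self_pos hγ (monic_ultraspherical hγ n).ne_zero

end UltraMoment

section Connection

variable {α γ : ℝ} (hα : -1 / 2 < α) (hγ : -1 / 2 < γ)
include hγ

lemma ultraMoment_ultraspherical_connection_self_pos (n : ℕ) :
    0 < ultraMoment hα (cosEval (ultraspherical α n)) (ultraspherical γ n) := by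
  have hlt : (ultraspherical γ n - ultraspherical α n).degree < n := by
    rw [← degree_ultraspherical hγ n]
    refine degree_sub_lt_left ?_ (monic_ultraspherical hγ n).ne_zero ?_
    · rw [degree_ultraspherical hγ, degree_ultraspherical hα]
    · rw [monic_ultraspherical hγ, monic_ultraspherical hα]
  have hsub := ultraMoment_ultraspherical_of_degree_lt hα hlt
  rw [map_sub, sub_eq_zero] at hsub
  exact hsub ▸ ultraMoment_ultraspherical_self_pos hα n

lemma ultraMoment_ultraspherical_connection_nonneg (hαγ : α ≤ γ) (n m : ℕ) :
    0 ≤ ultraMoment hα (cosEval (ultraspherical α n)) (ultraspherical γ m) := by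
  set φ := ultraMoment hα (cosEval (ultraspherical α n)) with hφ
  induction m using Nat.strong_induction_on with
  | h m ih =>
    rcases lt_trichotomy m n with hmn | rfl | hmn
    · refine (ultraMoment_ultraspherical_of_degree_lt hα ?_).ge
      rw [degree_ultraspherical hγ]
      exact_mod_cast hmn
    · exact (ultraMoment_ultraspherical_connection_self_pos hα hγ m).le
    · have recurrence : (ultraEigenvalue α m - ultraEigenvalue α n) * φ (ultraspherical γ m) =
          2 * (γ - α) *
            φ (X * derivative (ultraspherical γ m) - (m : ℝ) • ultraspherical γ m) := by
        have h := ultraMoment_ultraspherical_ultraOp hα n (ultraspherical γ m)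
        rw [← hφ, ultraOp_eq_add α γ, ultraOp_ultraspherical hγ] at h
        simp only [map_add, map_sub, map_smul, smul_eq_mul, ultraEigenvalue] at h ⊢
        linear_combination h
      have hnonneg := map_X_mul_derivative_ultraspherical_sub_nonneg hγ m ih
      have hgap : 0 < ultraEigenvalue α m - ultraEigenvalue α n :=
        sub_pos.mpr (ultraEigenvalue_strictMono hα hmn)
      refine nonneg_of_mul_nonneg_right ?_ hgap
      rw [recurrence]
      exact mul_nonneg (by linarith) hnonneg

end Connection

section Parseval

open Filter Topology

variable {γ : ℝ} (hγ : -1 / 2 < γ)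

/-- The part of degree less than `M` of the ultraspherical expansion of `f`. -/
noncomputable def ultraPartialSum (f : C(ℝ, ℝ)) (M : ℕ) : ℝ[X] :=
  ∑ m ∈ Finset.range M,
    (ultraMoment hγ f (ultraspherical γ m) /
      ultraMoment hγ (cosEval (ultraspherical γ m)) (ultraspherical γ m)) • ultraspherical γ m

lemma degree_ultraPartialSum_lt (f : C(ℝ, ℝ)) (M : ℕ) : (ultraPartialSum hγ f M).degree < M := by
  refine mem_degreeLT.mp (Submodule.sum_mem _ fun m hm ↦ Submodule.smul_mem _ _ ?_)
  rw [mem_degreeLT, degree_ultraspherical hγ]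
  exact_mod_cast Finset.mem_range.mp hm

lemma ultraMoment_sub_ultraPartialSum (f : C(ℝ, ℝ)) {M : ℕ} {q : ℝ[X]} (hq : q.degree < M) :
    ultraMoment hγ (f - cosEval (ultraPartialSum hγ f M)) q = 0 := by
  refine map_eq_zero_of_degree_lt hγ hq fun m hm ↦ ?_
  rw [ultraMoment_apply, sub_mul, map_sub, ← ultraMoment_apply, ← ultraMoment_apply,
    ultraMoment_cosEval_comm, ultraPartialSum, map_sum,
    Finset.sum_eq_single_of_mem m (Finset.mem_range.mpr hm), map_smul, smul_eq_mul,
    div_mul_cancel₀ _ (ultraMoment_ultraspherical_self_pos hγ m).ne', sub_self]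
  intro j _ hj
  rw [map_smul, ultraMoment_ultraspherical_of_ne hγ hj, smul_zero]

lemma ultraIntegral_sub_ultraPartialSum_le (f : C(ℝ, ℝ)) {M : ℕ} {q : ℝ[X]} (hq : q.degree < M) :
    ultraIntegral hγ ((f - cosEval (ultraPartialSum hγ f M)) *
        (f - cosEval (ultraPartialSum hγ f M))) ≤
      ultraIntegral hγ ((f - cosEval q) * (f - cosEval q)) := by
  set S := ultraPartialSum hγ f M
  have horth : ultraIntegral hγ ((f - cosEval S) * cosEval (S - q)) = 0 :=
    ultraMoment_sub_ultraPartialSum hγ f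
      ((degree_sub_le _ _).trans_lt (max_lt (degree_ultraPartialSum_lt hγ f M) hq))
  have hsplit : (f - cosEval q) * (f - cosEval q) = (f - cosEval S) * (f - cosEval S) +
      (2 : ℝ) • ((f - cosEval S) * cosEval (S - q)) + cosEval (S - q) * cosEval (S - q) := by
    rw [map_sub cosEval, two_smul]
    ring
  rw [hsplit, map_add, map_add, map_smul, horth, smul_zero, add_zero]
  exact le_add_of_nonneg_right (ultraIntegral_mul_self_nonneg hγ _)

lemma exists_cosEval_near (f : C(ℝ, ℝ)) {ε : ℝ} (hε : 0 < ε) :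
    ∃ q : ℝ[X], ∀ θ ∈ Icc 0 π, |f θ - cosEval q θ| < ε := by
  obtain ⟨q, hq⟩ := exists_polynomial_near_of_continuousOn (-1) 1 (f ∘ arccos)
    (f.continuous.comp continuous_arccos).continuousOn ε hε
  refine ⟨q, fun θ hθ ↦ ?_⟩
  simpa [cosEval_apply, arccos_cos hθ.1 hθ.2, abs_sub_comm] using hq (cos θ) (cos_mem_Icc θ)

lemma tendsto_ultraIntegral_sub_ultraPartialSum (f : C(ℝ, ℝ)) :
    Tendsto (fun M ↦ ultraIntegral hγ ((f - cosEval (ultraPartialSum hγ f M)) *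
      (f - cosEval (ultraPartialSum hγ f M)))) atTop (𝓝 0) := by
  refine tendsto_order.mpr
    ⟨fun a ha ↦ .of_forall fun M ↦ ha.trans_le (ultraIntegral_mul_self_nonneg hγ _),
      fun a ha ↦ ?_⟩
  set mass := ultraIntegral hγ 1
  have hmass_nonneg : 0 ≤ mass := by
    simpa using ultraIntegral_mul_self_nonneg hγ 1
  obtain ⟨q, hq⟩ := exists_cosEval_near f (sqrt_pos.mpr (div_pos ha (by linarith : 0 < mass + 1)))
  have hclose : ultraIntegral hγ ((f - cosEval q) * (f - cosEval q)) ≤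
      ultraIntegral hγ ((a / (mass + 1)) • 1) := by
    refine ultraIntegral_mono hγ fun θ hθ ↦ ?_
    have hθq := (lt_sqrt (abs_nonneg _)).mp (hq θ (Ioo_subset_Icc_self hθ))
    rw [sq_abs, sq] at hθq
    simpa using hθq.le
  filter_upwards [eventually_gt_atTop q.natDegree] with M hM
  calc _ ≤ ultraIntegral hγ ((f - cosEval q) * (f - cosEval q)) :=
        ultraIntegral_sub_ultraPartialSum_le hγ f
          (degree_le_natDegree.trans_lt (by exact_mod_cast hM))
    _ ≤ a / (mass + 1) * mass := hclose.trans_eq (map_smul _ _ _)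
    _ < a := by
        rw [div_mul_eq_mul_div, div_lt_iff₀ (by linarith)]
        linarith

lemma tendsto_ultraMoment_ultraPartialSum {α : ℝ} (hα : -1 / 2 < α) (hαγ : -1 / 2 < 2 * α - γ)
    (f r : C(ℝ, ℝ)) :
    Tendsto (fun M ↦ ultraMoment hα r (ultraPartialSum hγ f M)) atTop
      (𝓝 (ultraIntegral hα (f * r))) := by
  rw [← tendsto_sub_nhds_zero_iff]
  have hbound := ((tendsto_ultraIntegral_sub_ultraPartialSum hγ f).mul_const
    (ultraIntegral hαγ (r * r))).sqrt
  rw [zero_mul, sqrt_zero] at hbound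
  refine squeeze_zero_norm (fun M ↦ abs_le_sqrt ?_) hbound
  refine le_of_eq_of_le ?_ (ultraIntegral_mul_sq_le hγ hα hαγ (by ring) _ r)
  rw [ultraMoment_apply, ← map_sub, sub_mul, mul_comm r, ← neg_sub, map_neg, neg_sq]

lemma exists_mul_ultraMoment_le_of_two_mul_sub {α : ℝ} (hα : -1 / 2 < α)
    (hαγ : -1 / 2 < 2 * α - γ) (hle : α ≤ γ) {f : C(ℝ, ℝ)}
    (hf : ∀ m, 0 ≤ ultraMoment hγ f (ultraspherical γ m)) (n : ℕ) :
    ∃ c > 0, c * ultraMoment hγ f (ultraspherical γ n) ≤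
      ultraMoment hα f (ultraspherical α n) := by
  set A : ℕ → ℝ := fun m ↦ ultraMoment hα (cosEval (ultraspherical α n)) (ultraspherical γ m)
  set h : ℕ → ℝ := fun m ↦ ultraMoment hγ (cosEval (ultraspherical γ m)) (ultraspherical γ m)
  have hA_nonneg : ∀ m, 0 ≤ A m := ultraMoment_ultraspherical_connection_nonneg hα hγ hle n
  have hA_pos : 0 < A n := ultraMoment_ultraspherical_connection_self_pos hα hγ n
  have hh_pos : ∀ m, 0 < h m := ultraMoment_ultraspherical_self_pos hγ
  refine ⟨A n / h n, div_pos hA_pos (hh_pos n), ?_⟩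
  refine ge_of_tendsto (tendsto_ultraMoment_ultraPartialSum hγ hα hαγ f _) ?_
  filter_upwards [eventually_gt_atTop n] with M hM
  simp only [ultraPartialSum, map_sum, map_smul, smul_eq_mul]
  rw [div_mul_comm]
  exact Finset.single_le_sum (f := fun m ↦ ultraMoment hγ f (ultraspherical γ m) / h m * A m)
    (fun m _ ↦ mul_nonneg (div_nonneg (hf m) (hh_pos m).le) (hA_nonneg m))
    (Finset.mem_range.mpr hM)

end Parseval

section Descent

lemma exists_mul_ultraMoment_le {α γ : ℝ} (hα : -1 / 2 < α) (hγ : -1 / 2 < γ) (hle : α ≤ γ)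
    {f : C(ℝ, ℝ)} (hf : ∀ m, 0 ≤ ultraMoment hγ f (ultraspherical γ m)) (n : ℕ) :
    ∃ c > 0, c * ultraMoment hγ f (ultraspherical γ n) ≤
      ultraMoment hα f (ultraspherical α n) := by
  -- Any ratio strictly between `1/2` and `1` would do for a step in `γ + 1/2`.
  obtain ⟨k, hk⟩ : ∃ k : ℕ, (3 / 4) ^ k * (γ + 1 / 2) ≤ α + 1 / 2 := by
    obtain ⟨k, hk⟩ := exists_pow_lt_of_lt_one (y := (3 / 4 : ℝ))
      (div_pos (by linarith : 0 < α + 1 / 2) (by linarith : 0 < γ + 1 / 2)) (by norm_num)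
    exact ⟨k, ((lt_div_iff₀ (by linarith)).mp hk).le⟩
  induction k generalizing γ with
  | zero => exact exists_mul_ultraMoment_le_of_two_mul_sub hγ hα (by linarith) hle hf n
  | succ k ih =>
    obtain ⟨β, hβ⟩ : ∃ β, β + 1 / 2 = 3 / 4 * (γ + 1 / 2) := ⟨_, sub_add_cancel _ _⟩
    have hβ_gt : -1 / 2 < β := by linarith
    rcases le_total β α with hβα | hαβ
    · exact exists_mul_ultraMoment_le_of_two_mul_sub hγ hα (by linarith) hle hf n
    have descend := exists_mul_ultraMoment_le_of_two_mul_sub hγ hβ_gt (by linarith) (by linarith) hf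
    have hf_β : ∀ m, 0 ≤ ultraMoment hβ_gt f (ultraspherical β m) := fun m ↦ by
      obtain ⟨c, hc, hc_le⟩ := descend m
      exact (mul_nonneg hc.le (hf m)).trans hc_le
    obtain ⟨b, hb, hb_le⟩ := descend n
    obtain ⟨c, hc, hc_le⟩ := ih hβ_gt hαβ hf_β (by rwa [hβ, ← mul_assoc, ← pow_succ])
    refine ⟨c * b, mul_pos hc hb, le_trans ?_ hc_le⟩
    rw [mul_assoc]
    exact mul_le_mul_of_nonneg_left hb_le hc.le

end Descent

section RieszMean

/-- The truncated power `θ ↦ (t - θ)₊ ^ δ`. -/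
noncomputable def truncPower {δ : ℝ} (hδ : 0 < δ) (t : ℝ) : C(ℝ, ℝ) :=
  ⟨fun θ ↦ max (t - θ) 0 ^ δ, (by fun_prop : Continuous fun θ ↦ max (t - θ) 0).rpow_const
    fun _ ↦ Or.inr hδ.le⟩

lemma truncPower_of_le {δ : ℝ} (hδ : 0 < δ) {t θ : ℝ} (hθ : θ ≤ t) :
    truncPower hδ t θ = (t - θ) ^ δ := by
  simp [truncPower, hθ]

lemma truncPower_of_ge {δ : ℝ} (hδ : 0 < δ) {t θ : ℝ} (hθ : t ≤ θ) : truncPower hδ t θ = 0 := by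
  simp [truncPower, hθ, hδ.ne']

lemma sin_half_rpow_mul_cos_half_rpow {θ : ℝ} (hθ : θ ∈ Icc 0 π) (s : ℝ) :
    sin (θ / 2) ^ s * cos (θ / 2) ^ s = 2⁻¹ ^ s * sin θ ^ s := by
  have hsin : 0 ≤ sin (θ / 2) :=
    sin_nonneg_of_mem_Icc ⟨by linarith [hθ.1], by linarith [hθ.1, hθ.2]⟩
  have hcos : 0 ≤ cos (θ / 2) :=
    cos_nonneg_of_mem_Icc ⟨by linarith [hθ.1, pi_pos], by linarith [hθ.2]⟩
  have hdouble : sin (θ / 2) * cos (θ / 2) = 2⁻¹ * sin θ := by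
    have h := sin_two_mul (θ / 2)
    rw [mul_div_cancel₀ θ two_ne_zero] at h
    linarith
  rw [← mul_rpow hsin hcos, hdouble, mul_rpow (by norm_num) (sin_nonneg_of_mem_Icc hθ)]

lemma ultraMoment_truncPower {γ : ℝ} (hγ : -1 / 2 < γ) {δ t : ℝ} (hδ : 0 < δ) (ht : t ∈ Ioc 0 π)
    (p : ℝ[X]) :
    ultraMoment hγ (truncPower hδ t) p =
      ∫ θ in 0..t, (t - θ) ^ δ * p.eval (cos θ) * sin θ ^ (2 * γ) := by
  have hint := intervalIntegrable_mul_sin_rpow hγ (truncPower hδ t * cosEval p)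
  have ht_mem : t ∈ uIcc 0 π := by
    rw [uIcc_of_le pi_pos.le]
    exact Ioc_subset_Icc_self ht
  have head : ∫ θ in 0..t, (truncPower hδ t * cosEval p) θ * sin θ ^ (2 * γ) =
      ∫ θ in 0..t, (t - θ) ^ δ * p.eval (cos θ) * sin θ ^ (2 * γ) := by
    refine intervalIntegral.integral_congr_Ioo_of_le ht.1.le fun θ hθ ↦ ?_
    simp only [ContinuousMap.mul_apply, truncPower_of_le hδ hθ.2.le, cosEval_apply]
  have tail : ∫ θ in t..π, (truncPower hδ t * cosEval p) θ * sin θ ^ (2 * γ) = 0 := by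
    refine intervalIntegral.integral_zero_ae (.of_forall fun θ hθ ↦ ?_)
    rw [uIoc_of_le ht.2] at hθ
    rw [ContinuousMap.mul_apply, truncPower_of_ge hδ hθ.1.le, zero_mul, zero_mul]
  rw [ultraMoment_apply, ultraIntegral_apply, ← head,
    ← intervalIntegral.integral_add_adjacent_intervals
      (hint.mono_set (uIcc_subset_uIcc_left ht_mem))
      (hint.mono_set (uIcc_subset_uIcc_right ht_mem)),
    tail, add_zero]

lemma exists_FJ_eq_mul_ultraMoment {γ : ℝ} (hγ : -1 / 2 < γ) {δ t : ℝ} (hδ : 0 < δ)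
    (ht : t ∈ Ioc 0 π) (n : ℕ) :
    ∃ c > 0, FJ n γ γ δ t = c * ultraMoment hγ (truncPower hδ t) (ultraspherical γ n) := by
  obtain ⟨c, hc, hjacobi⟩ := exists_jacobiP_eq_mul_eval_ultraspherical hγ n
  refine ⟨c * 2⁻¹ ^ (2 * γ), by positivity, ?_⟩
  rw [ultraMoment_truncPower hγ hδ ht, ← intervalIntegral.integral_const_mul, FJ]
  refine intervalIntegral.integral_congr_Ioo_of_le ht.1.le fun θ hθ ↦ ?_
  have hhalf := sin_half_rpow_mul_cos_half_rpow ⟨hθ.1.le, hθ.2.le.trans ht.2⟩ (2 * γ)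
  simp only [hjacobi]
  linear_combination (t - θ) ^ δ * (c * (ultraspherical γ n).eval (cos θ)) * hhalf

end RieszMean

end

theorem FJ_pos_transfer_ultraspherical_general {α γ δ t : ℝ} (hα : -1 / 2 < α) (hαγ : α ≤ γ)
    (hδ : 0 < δ) (ht : t ∈ Ioc 0 π) (hnonneg : ∀ m, 0 ≤ FJ m γ γ δ t) {n : ℕ}
    (hpos : 0 < FJ n γ γ δ t) : 0 < FJ n α α δ t := by
  have hγ : -1 / 2 < γ := hα.trans_le hαγ
  have moment_nonneg (m : ℕ) : 0 ≤ ultraMoment hγ (truncPower hδ t) (ultraspherical γ m) := by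
    obtain ⟨c, hc, hFJ⟩ := exists_FJ_eq_mul_ultraMoment hγ hδ ht m
    exact nonneg_of_mul_nonneg_right (hFJ ▸ hnonneg m) hc
  obtain ⟨a, ha, hFJα⟩ := exists_FJ_eq_mul_ultraMoment hα hδ ht n
  obtain ⟨b, hb, hFJγ⟩ := exists_FJ_eq_mul_ultraMoment hγ hδ ht n
  obtain ⟨c, hc, hle⟩ := exists_mul_ultraMoment_le hα hγ hαγ moment_nonneg n
  have moment_pos : 0 < ultraMoment hγ (truncPower hδ t) (ultraspherical γ n) :=
    pos_of_mul_pos_right (hFJγ ▸ hpos) hb.le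
  exact hFJα ▸ mul_pos ha ((mul_pos hc moment_pos).trans_le hle)

theorem FJ_pos_transfer_ultraspherical (γ α : ℝ) (hγ : -1/2 < γ) (hα : -1/2 < α)
    (hαγ : (γ - 1) / 2 < α) (hαγ' : α < γ) (δ : ℝ) (hδ : 0 < δ)
    (t : ℝ) (ht : t ∈ Set.Ioc (0:ℝ) π)
    (hpos : ∀ n : ℕ, 0 < FJ n γ γ δ t) :
    ∀ n : ℕ, 0 < FJ n α α δ t :=
  fun n ↦ FJ_pos_transfer_ultraspherical_general hα hαγ'.le hδ ht (fun m ↦ (hpos m).le) (hpos n)
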